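/- Let f : V × V → W be an object of SSKE of rank (1 | 0), i.e., dim W₀ = 1 and W₁ = 0. Let R = { v ∈ V : f(v, u) = 0 for all u ∈ V } be the radical of f (a graded subspace of V), and let D be a graded complement of R in V (so V = D ⊕ R). If dim D₀ = 2 and dim D₁ = 0, then X_f = R ⊗ W as subspaces of V ⊗ W. -/

import Mathlib

open TensorProduct

noncomputable section

/-- The sign `(−1)^{σ·τ}` (for degrees `σ τ : ℤ/2`) as an element of the field `F`. -/
def ssign (F : Type*) [Field F] (σ τ : ZMod 2) : F := (-1 : F) ^ (σ * τ).val

variable {F V W L : Type*}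

section Defs

variable [Field F] [AddCommGroup V] [Module F V] [AddCommGroup W] [Module F W]
  [AddCommGroup L] [Module F L]

/-- `f : V × V → W` is an object of the category `SSKE`: a grading-preserving
skew-supersymmetric bilinear map between superspaces whose image spans `W`. -/
structure IsSSKE (gV : ZMod 2 → Submodule F V) (gW : ZMod 2 → Submodule F W)
    (f : V →ₗ[F] V →ₗ[F] W) : Prop where
  internalV : DirectSum.IsInternal gV
  internalW : DirectSum.IsInternal gW
  grading : ∀ σ τ : ZMod 2, ∀ u ∈ gV σ, ∀ v ∈ gV τ, f u v ∈ gW (σ + τ)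
  skew : ∀ σ τ : ZMod 2, ∀ u ∈ gV σ, ∀ v ∈ gV τ, f u v = -(ssign F σ τ) • f v u
  span_eq_top : Submodule.span F {w : W | ∃ u v : V, f u v = w} = ⊤

/-- A subspace `U` of a superspace is graded: `U = (U ∩ V₀) ⊕ (U ∩ V₁)`. -/
def IsGradedSub (gV : ZMod 2 → Submodule F V) (U : Submodule F V) : Prop :=
  U = U ⊓ gV 0 ⊔ U ⊓ gV 1

/-- The subspace `X_g` of `V ⊗ W` (for the restriction of `g` to a subspace `U` of `V`),
spanned by all `(−1)^{|a||c|} a ⊗ g(b,c) + (−1)^{|b||a|} b ⊗ g(c,a) + (−1)^{|c||b|} c ⊗ g(a,b)`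
with `a, b, c` homogeneous elements of `U`. For `U = ⊤` this is `X_g` itself. -/
def XFr (gV : ZMod 2 → Submodule F V) (U : Submodule F V)
    (g : V →ₗ[F] V →ₗ[F] W) : Submodule F (V ⊗[F] W) :=
  Submodule.span F {z : V ⊗[F] W | ∃ σ τ ρ : ZMod 2, ∃ a ∈ U ⊓ gV σ, ∃ b ∈ U ⊓ gV τ,
    ∃ c ∈ U ⊓ gV ρ,
    z = ssign F σ ρ • (a ⊗ₜ[F] g b c) + ssign F τ σ • (b ⊗ₜ[F] g c a)
      + ssign F ρ τ • (c ⊗ₜ[F] g a b)}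

/-- The epicenter `Z*(g)` of (the restriction to a subspace `U` of) a
skew-supersymmetric bilinear map `g`: all `w = g(u,v)` with `u, v` homogeneous in `U`
such that `(−1)^{|x||v|} x ⊗ w ∈ X_g` for every homogeneous `x ∈ U`. -/
def Zstar (gV : ZMod 2 → Submodule F V) (U : Submodule F V)
    (g : V →ₗ[F] V →ₗ[F] W) : Set W :=
  {w : W | ∃ σ τ : ZMod 2, ∃ u ∈ U ⊓ gV σ, ∃ v ∈ U ⊓ gV τ, w = g u v ∧
    ∀ ρ : ZMod 2, ∀ x ∈ U ⊓ gV ρ, ssign F ρ τ • (x ⊗ₜ[F] w) ∈ XFr gV U g}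

/-- The subspace `U ⊗ T` of `V ⊗ W`. -/
def tensSpan (U : Submodule F V) (T : Submodule F W) : Submodule F (V ⊗[F] W) :=
  Submodule.span F {z : V ⊗[F] W | ∃ u ∈ U, ∃ t ∈ T, z = u ⊗ₜ[F] t}

/-- The bracket of the Lie superalgebra `L_f = V ⊕ W`:
`[(v,w),(v′,w′)] = (0, f(v,v′))`. -/
def superBracket (f : V →ₗ[F] V →ₗ[F] W) :
    (V × W) →ₗ[F] (V × W) →ₗ[F] (V × W) :=
  ((f.compl₂ (LinearMap.fst F V W)).compr₂ (LinearMap.inr F V W)).comp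
    (LinearMap.fst F V W)

/-- The derived subalgebra `L² `: the span of all brackets. -/
def derivedSub (B : L →ₗ[F] L →ₗ[F] L) : Submodule F L :=
  Submodule.span F {z : L | ∃ x y : L, z = B x y}

/-- The span of all brackets of elements of a subspace `P`. -/
def derivedOn (B : L →ₗ[F] L →ₗ[F] L) (P : Submodule F L) : Submodule F L :=
  Submodule.span F {z : L | ∃ x ∈ P, ∃ y ∈ P, z = B x y}

/-- The axioms of a Lie superalgebra: `L` with grading `gL`, an internal direct sum,
and a bilinear bracket `B` which preserves the grading and satisfies graded
skew-symmetry and the graded Jacobi identity. -/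
structure IsLieSuper (gL : ZMod 2 → Submodule F L) (B : L →ₗ[F] L →ₗ[F] L) : Prop where
  internal : DirectSum.IsInternal gL
  grading : ∀ σ τ : ZMod 2, ∀ x ∈ gL σ, ∀ y ∈ gL τ, B x y ∈ gL (σ + τ)
  skew : ∀ σ τ : ZMod 2, ∀ x ∈ gL σ, ∀ y ∈ gL τ, B x y = -(ssign F σ τ) • B y x
  jacobi : ∀ σ τ ρ : ZMod 2, ∀ x ∈ gL σ, ∀ y ∈ gL τ, ∀ z ∈ gL ρ,
    ssign F σ ρ • B x (B y z) + ssign F τ σ • B y (B z x)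
      + ssign F ρ τ • B z (B x y) = 0

end Defs

/-!
The radical `R = ker f` is a graded subspace, and `f` vanishes as soon as one argument lies in it.
So a generator of `X_f` with a homogeneous entry `r ∈ R` collapses to `± r ⊗ f(b, c)`; such tensors
span `R ⊗ W`, which gives one inclusion. If `R` has an even complement of dimension two, then
`V₁ ⊆ R`, so `f` is alternating and `a ↦ f(a, ·)` has rank two. The remaining generators are then
the sums `a ⊗ f(b, c) + b ⊗ f(c, a) + c ⊗ f(a, b)`. The vectors `a, b, c` satisfy a nontrivial
relation `αa + βb + γc ∈ R`, and multiplying the sum by a nonzero coefficient, say `α`, turns it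
into `(αa + βb + γc) ⊗ f(b, c) ∈ R ⊗ W`.
-/

theorem ssign_ne_zero [Field F] (σ τ : ZMod 2) : ssign F σ τ ≠ 0 :=
  pow_ne_zero _ (neg_ne_zero.2 one_ne_zero)

theorem ssign_zero_zero [Field F] : ssign F 0 0 = 1 := by
  simp [ssign]

theorem exists_even_add_odd [Field F] [AddCommGroup V] [Module F V] {gV : ZMod 2 → Submodule F V}
    (hgV : DirectSum.IsInternal gV) (v : V) : ∃ x ∈ gV 0, ∃ y ∈ gV 1, x + y = v := by
  have hcompl : IsCompl (gV 0) (gV 1) :=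
    hgV.isCompl zero_ne_one (Set.eq_univ_iff_forall.2 (by decide)).symm
  obtain ⟨x, y, hx, hy, hxy⟩ := Submodule.codisjoint_iff_exists_add_eq.1 hcompl.codisjoint v
  exact ⟨x, hx, y, hy, hxy⟩

section TensorSpan

variable [Field F] [AddCommGroup V] [Module F V] [AddCommGroup W] [Module F W]

theorem tmul_mem_tensSpan {U : Submodule F V} {T : Submodule F W} {u : V} {t : W}
    (hu : u ∈ U) (ht : t ∈ T) : u ⊗ₜ[F] t ∈ tensSpan U T :=
  Submodule.subset_span ⟨u, hu, t, ht, rfl⟩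

theorem tensSpan_le {U : Submodule F V} {T : Submodule F W} {P : Submodule F (V ⊗[F] W)} :
    tensSpan U T ≤ P ↔ ∀ u ∈ U, ∀ t ∈ T, u ⊗ₜ[F] t ∈ P := by
  refine Submodule.span_le.trans ⟨fun h u hu t ht => h ⟨u, hu, t, ht, rfl⟩, ?_⟩
  rintro h _ ⟨u, hu, t, ht, rfl⟩
  exact h u hu t ht

end TensorSpan

section SuperJacobi

variable [Field F] [AddCommGroup V] [Module F V] [AddCommGroup W] [Module F W]
  {f : V →ₗ[F] V →ₗ[F] W}

/-- The generator `(−1)^{|a||c|} a ⊗ f(b,c) + (−1)^{|b||a|} b ⊗ f(c,a) + (−1)^{|c||b|} c ⊗ f(a,b)`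
of `X_f`, with the degrees `σ, τ, ρ` of `a, b, c` passed as explicit parameters; the value at
`σ = τ = ρ = 0` is the ungraded cyclic sum. -/
def superJacobi (f : V →ₗ[F] V →ₗ[F] W) (σ τ ρ : ZMod 2) (a b c : V) : V ⊗[F] W :=
  ssign F σ ρ • (a ⊗ₜ[F] f b c) + ssign F τ σ • (b ⊗ₜ[F] f c a) + ssign F ρ τ • (c ⊗ₜ[F] f a b)

theorem superJacobi_rotate (f : V →ₗ[F] V →ₗ[F] W) (σ τ ρ : ZMod 2) (a b c : V) :
    superJacobi f τ ρ σ b c a = superJacobi f σ τ ρ a b c := by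
  simp only [superJacobi]
  abel

theorem superJacobi_eq_of_mem_ker (hker : LinearMap.ker f ≤ LinearMap.ker f.flip)
    (σ τ ρ : ZMod 2) {a : V} (b c : V) (ha : a ∈ LinearMap.ker f) :
    superJacobi f σ τ ρ a b c = ssign F σ ρ • (a ⊗ₜ[F] f b c) := by
  have hab : f a b = 0 := LinearMap.congr_fun ha b
  have hca : f c a = 0 := LinearMap.congr_fun (hker ha) c
  simp [superJacobi, hab, hca]

theorem superJacobi_mem_tensSpan_of_mem_ker (hker : LinearMap.ker f ≤ LinearMap.ker f.flip)
    (σ τ ρ : ZMod 2) {a : V} (b c : V) (ha : a ∈ LinearMap.ker f) :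
    superJacobi f σ τ ρ a b c ∈ tensSpan (LinearMap.ker f) ⊤ := by
  rw [superJacobi_eq_of_mem_ker hker σ τ ρ b c ha]
  exact Submodule.smul_mem _ _ (tmul_mem_tensSpan ha Submodule.mem_top)

theorem smul_superJacobi_even (hf : f.IsAlt) {α β γ : F} {a b c : V}
    (h : α • a + β • b + γ • c ∈ LinearMap.ker f) :
    α • superJacobi f 0 0 0 a b c = (α • a + β • b + γ • c) ⊗ₜ[F] f b c := by
  have hab : α • f a b = γ • f b c := by
    have := LinearMap.congr_fun h b
    simp only [map_add, map_smul, LinearMap.add_apply, LinearMap.smul_apply, hf.self_eq_zero,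
      smul_zero, add_zero, LinearMap.zero_apply, ← hf.neg b c, smul_neg] at this
    exact add_neg_eq_zero.1 this
  have hca : α • f c a = β • f b c := by
    have := LinearMap.congr_fun h c
    simp only [map_add, map_smul, LinearMap.add_apply, LinearMap.smul_apply, hf.self_eq_zero,
      smul_zero, add_zero, LinearMap.zero_apply, ← hf.neg c a, smul_neg] at this
    exact neg_add_eq_zero.1 this
  calc α • superJacobi f 0 0 0 a b c
      = α • (a ⊗ₜ[F] f b c) + b ⊗ₜ[F] (α • f c a) + c ⊗ₜ[F] (α • f a b) := by
        simp only [superJacobi, ssign_zero_zero, one_smul, smul_add, TensorProduct.tmul_smul]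
    _ = (α • a + β • b + γ • c) ⊗ₜ[F] f b c := by
        simp only [hab, hca, TensorProduct.add_tmul, TensorProduct.tmul_smul,
          TensorProduct.smul_tmul']

theorem superJacobi_even_mem_of_smul_add_mem_ker (hf : f.IsAlt) {α β γ : F} {a b c : V}
    (hα : α ≠ 0) (h : α • a + β • b + γ • c ∈ LinearMap.ker f) :
    superJacobi f 0 0 0 a b c ∈ tensSpan (LinearMap.ker f) ⊤ := by
  rw [← Submodule.smul_mem_iff _ hα, smul_superJacobi_even hf h]
  exact tmul_mem_tensSpan h Submodule.mem_top

theorem exists_smul_add_mem_ker_of_rank_le_two {g : V →ₗ[F] W} (hg : g.rank ≤ 2) (a b c : V) :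
    ∃ α β γ : F, α • a + β • b + γ • c ∈ LinearMap.ker g ∧ (α ≠ 0 ∨ β ≠ 0 ∨ γ ≠ 0) := by
  have hdep : ¬ LinearIndependent F ![g.rangeRestrict a, g.rangeRestrict b, g.rangeRestrict c] := by
    intro hli
    have hcard := hli.cardinal_lift_le_rank.trans (Cardinal.lift_le.2 hg)
    norm_num at hcard
  obtain ⟨s, hs, i, hi⟩ := Fintype.not_linearIndependent_iff.1 hdep
  refine ⟨s 0, s 1, s 2, ?_, ?_⟩
  · simpa [Fin.sum_univ_three, Subtype.ext_iff] using hs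
  · fin_cases i <;> simp_all

theorem superJacobi_even_mem_tensSpan_ker (hf : f.IsAlt) (hrank : f.rank ≤ 2) (a b c : V) :
    superJacobi f 0 0 0 a b c ∈ tensSpan (LinearMap.ker f) ⊤ := by
  obtain ⟨α, β, γ, h, hα | hβ | hγ⟩ := exists_smul_add_mem_ker_of_rank_le_two hrank a b c
  · exact superJacobi_even_mem_of_smul_add_mem_ker hf hα h
  · rw [← superJacobi_rotate]
    refine superJacobi_even_mem_of_smul_add_mem_ker hf (β := γ) (γ := α) hβ ?_
    rwa [← add_rotate]
  · rw [← superJacobi_rotate, ← superJacobi_rotate]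
    refine superJacobi_even_mem_of_smul_add_mem_ker hf (β := α) (γ := β) hγ ?_
    rwa [add_rotate]

end SuperJacobi

namespace IsSSKE

variable [Field F] [AddCommGroup V] [Module F V] [AddCommGroup W] [Module F W]
  {gV : ZMod 2 → Submodule F V} {gW : ZMod 2 → Submodule F W} {f : V →ₗ[F] V →ₗ[F] W}

theorem mem_ker_of_add_mem_ker (hf : IsSSKE gV gW f) {x y : V} (hx : x ∈ gV 0) (hy : y ∈ gV 1)
    (hxy : x + y ∈ LinearMap.ker f) : x ∈ LinearMap.ker f := by
  have apply_eq_zero : ∀ τ : ZMod 2, ∀ u ∈ gV τ, f x u = 0 := by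
    intro τ u hu
    have hdisj : Disjoint (gW (0 + τ)) (gW (1 + τ)) :=
      hf.internalW.submodule_iSupIndep.pairwiseDisjoint (by simp)
    refine Submodule.disjoint_def.1 hdisj _ (hf.grading 0 τ x hx u hu) ?_
    have hneg : f x u = -f y u := by
      simpa [add_eq_zero_iff_eq_neg] using LinearMap.congr_fun hxy u
    exact hneg ▸ neg_mem (hf.grading 1 τ y hy u hu)
  ext u
  obtain ⟨u₀, hu₀, u₁, hu₁, rfl⟩ := exists_even_add_odd hf.internalV u
  simp [apply_eq_zero 0 u₀ hu₀, apply_eq_zero 1 u₁ hu₁]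

theorem exists_even_add_odd_of_mem_ker (hf : IsSSKE gV gW f) {v : V} (hv : v ∈ LinearMap.ker f) :
    ∃ x ∈ LinearMap.ker f ⊓ gV 0, ∃ y ∈ LinearMap.ker f ⊓ gV 1, x + y = v := by
  obtain ⟨x, hx, y, hy, rfl⟩ := exists_even_add_odd hf.internalV v
  have hxker := hf.mem_ker_of_add_mem_ker hx hy hv
  exact ⟨x, ⟨hxker, hx⟩, y, ⟨(Submodule.add_mem_iff_right _ hxker).1 hv, hy⟩, rfl⟩

theorem ker_le_ker_flip (hf : IsSSKE gV gW f) : LinearMap.ker f ≤ LinearMap.ker f.flip := by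
  have apply_eq_zero : ∀ σ τ : ZMod 2, ∀ u ∈ gV σ, ∀ r ∈ LinearMap.ker f ⊓ gV τ, f u r = 0 := by
    rintro σ τ u hu r ⟨hr, hrτ⟩
    have hru : f r u = 0 := LinearMap.congr_fun hr u
    rw [hf.skew σ τ u hu r hrτ, hru, smul_zero]
  intro r hr
  obtain ⟨r₀, hr₀, r₁, hr₁, rfl⟩ := hf.exists_even_add_odd_of_mem_ker hr
  ext u
  obtain ⟨u₀, hu₀, u₁, hu₁, rfl⟩ := exists_even_add_odd hf.internalV u
  simp [apply_eq_zero 0 0 u₀ hu₀ r₀ hr₀, apply_eq_zero 0 1 u₀ hu₀ r₁ hr₁,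
    apply_eq_zero 1 0 u₁ hu₁ r₀ hr₀, apply_eq_zero 1 1 u₁ hu₁ r₁ hr₁]

theorem odd_le_ker_of_codisjoint (hf : IsSSKE gV gW f) {D : Submodule F V}
    (hD : Codisjoint D (LinearMap.ker f)) (hDeven : D ≤ gV 0) : gV 1 ≤ LinearMap.ker f := by
  intro v hv
  obtain ⟨d, r, hd, hr, rfl⟩ := Submodule.codisjoint_iff_exists_add_eq.1 hD v
  have hdker : -d ∈ LinearMap.ker f :=
    hf.mem_ker_of_add_mem_ker (neg_mem (hDeven hd)) hv (by rwa [neg_add_cancel_left])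
  exact add_mem (neg_mem_iff.1 hdker) hr

theorem isAlt_of_odd_le_ker (hf : IsSSKE gV gW f) (hchar2 : (2 : F) ≠ 0)
    (hodd : gV 1 ≤ LinearMap.ker f) : f.IsAlt := by
  intro v
  obtain ⟨x, hx, y, hy, rfl⟩ := exists_even_add_odd hf.internalV v
  have hyx : f y = 0 := hodd hy
  have hxy : f x y = 0 := LinearMap.congr_fun (hf.ker_le_ker_flip (hodd hy)) x
  have hxx : f x x = 0 := by
    have hskew : f x x = -f x x := by
      simpa [ssign_zero_zero] using hf.skew 0 0 x hx x hx
    refine (smul_eq_zero.1 ?_).resolve_left hchar2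
    rw [two_smul, add_eq_zero_iff_eq_neg, ← hskew]
  simp [hyx, hxy, hxx]

theorem tmul_apply_mem_XFr_of_homogeneous (hf : IsSSKE gV gW f) {σ τ ρ : ZMod 2} {r b c : V}
    (hr : r ∈ LinearMap.ker f ⊓ gV σ) (hb : b ∈ gV τ) (hc : c ∈ gV ρ) :
    r ⊗ₜ[F] f b c ∈ XFr gV ⊤ f := by
  rw [← Submodule.smul_mem_iff _ (ssign_ne_zero (F := F) σ ρ),
    ← superJacobi_eq_of_mem_ker hf.ker_le_ker_flip σ τ ρ b c hr.1]
  exact Submodule.subset_span ⟨σ, τ, ρ, r, ⟨Submodule.mem_top, hr.2⟩, b, ⟨Submodule.mem_top, hb⟩,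
    c, ⟨Submodule.mem_top, hc⟩, rfl⟩

theorem tmul_apply_mem_XFr (hf : IsSSKE gV gW f) {r : V} (hr : r ∈ LinearMap.ker f) (u v : V) :
    r ⊗ₜ[F] f u v ∈ XFr gV ⊤ f := by
  obtain ⟨u₀, hu₀, u₁, hu₁, rfl⟩ := exists_even_add_odd hf.internalV u
  obtain ⟨v₀, hv₀, v₁, hv₁, rfl⟩ := exists_even_add_odd hf.internalV v
  have mem_of_homogeneous : ∀ σ : ZMod 2, ∀ s ∈ LinearMap.ker f ⊓ gV σ,
      s ⊗ₜ[F] f (u₀ + u₁) (v₀ + v₁) ∈ XFr gV ⊤ f := by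
    intro σ s hs
    simp only [map_add, LinearMap.add_apply, TensorProduct.tmul_add]
    exact add_mem
      (add_mem (hf.tmul_apply_mem_XFr_of_homogeneous hs hu₀ hv₀)
        (hf.tmul_apply_mem_XFr_of_homogeneous hs hu₁ hv₀))
      (add_mem (hf.tmul_apply_mem_XFr_of_homogeneous hs hu₀ hv₁)
        (hf.tmul_apply_mem_XFr_of_homogeneous hs hu₁ hv₁))
  obtain ⟨r₀, hr₀, r₁, hr₁, rfl⟩ := hf.exists_even_add_odd_of_mem_ker hr
  rw [TensorProduct.add_tmul]
  exact add_mem (mem_of_homogeneous 0 r₀ hr₀) (mem_of_homogeneous 1 r₁ hr₁)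

theorem tensSpan_ker_le_XFr (hf : IsSSKE gV gW f) :
    tensSpan (LinearMap.ker f) ⊤ ≤ XFr gV ⊤ f := by
  rw [tensSpan_le]
  rintro r hr t -
  have hspan : Submodule.span F {w : W | ∃ u v : V, f u v = w} ≤
      (XFr gV ⊤ f).comap (TensorProduct.mk F V W r) := by
    rw [Submodule.span_le]
    rintro _ ⟨u, v, rfl⟩
    exact hf.tmul_apply_mem_XFr hr u v
  exact hspan (hf.span_eq_top ▸ Submodule.mem_top)

theorem XFr_le_tensSpan_ker (hf : IsSSKE gV gW f) (hchar2 : (2 : F) ≠ 0)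
    (hodd : gV 1 ≤ LinearMap.ker f) (hrank : f.rank ≤ 2) :
    XFr gV ⊤ f ≤ tensSpan (LinearMap.ker f) ⊤ := by
  have degree_eq_zero : ∀ σ : ZMod 2, ∀ v ∈ gV σ, v ∉ LinearMap.ker f → σ = 0 := by
    intro σ v hv hvker
    fin_cases σ
    · rfl
    · exact absurd (hodd hv) hvker
  refine Submodule.span_le.2 ?_
  rintro _ ⟨σ, τ, ρ, a, ⟨-, ha⟩, b, ⟨-, hb⟩, c, ⟨-, hc⟩, rfl⟩
  change superJacobi f σ τ ρ a b c ∈ tensSpan (LinearMap.ker f) ⊤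
  by_cases haker : a ∈ LinearMap.ker f
  · exact superJacobi_mem_tensSpan_of_mem_ker hf.ker_le_ker_flip σ τ ρ b c haker
  by_cases hbker : b ∈ LinearMap.ker f
  · rw [← superJacobi_rotate]
    exact superJacobi_mem_tensSpan_of_mem_ker hf.ker_le_ker_flip τ ρ σ c a hbker
  by_cases hcker : c ∈ LinearMap.ker f
  · rw [← superJacobi_rotate, ← superJacobi_rotate]
    exact superJacobi_mem_tensSpan_of_mem_ker hf.ker_le_ker_flip ρ σ τ a b hcker
  obtain rfl := degree_eq_zero σ a ha haker
  obtain rfl := degree_eq_zero τ b hb hbker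
  obtain rfl := degree_eq_zero ρ c hc hcker
  exact superJacobi_even_mem_tensSpan_ker (hf.isAlt_of_odd_le_ker hchar2 hodd) hrank a b c

end IsSSKE

theorem stmt18_general [Field F] [AddCommGroup V] [Module F V] [AddCommGroup W] [Module F W]
    (hchar2 : (2 : F) ≠ 0) (gV : ZMod 2 → Submodule F V) (gW : ZMod 2 → Submodule F W)
    (f : V →ₗ[F] V →ₗ[F] W) (hf : IsSSKE gV gW f)
    (R : Submodule F V) (hR : ∀ v : V, v ∈ R ↔ ∀ u : V, f v u = 0)
    (D : Submodule F V) (hDg : IsGradedSub gV D) (hDR : IsCompl D R)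
    (hD0 : Module.finrank F ↥(D ⊓ gV 0) = 2) (hD1 : D ⊓ gV 1 = ⊥) :
    XFr gV (⊤ : Submodule F V) f = tensSpan R (⊤ : Submodule F W) := by
  obtain rfl : R = LinearMap.ker f := by
    ext v
    simp [hR, LinearMap.ext_iff]
  have hDeven : D ⊓ gV 0 = D := by
    rw [IsGradedSub, hD1, sup_bot_eq] at hDg
    exact hDg.symm
  have hrank : f.rank = 2 := by
    rw [hDeven, (f.kerComplementEquivRange hDR).finrank_eq] at hD0
    exact Module.rank_eq_ofNat_iff_finrank_eq_ofNat 2 |>.2 hD0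
  have hodd := hf.odd_le_ker_of_codisjoint hDR.codisjoint (inf_eq_left.1 hDeven)
  exact le_antisymm (hf.XFr_le_tensSpan_ker hchar2 hodd hrank.le) hf.tensSpan_ker_le_XFr

/-- Let `f` be an object of SSKE of rank `(1 | 0)`, let
`R = {v ∈ V : f(v,u) = 0 for all u}` be its radical, and let `D` be a graded
complement of `R` in `V`. If `dim D₀ = 2` and `dim D₁ = 0`, then
`X_f = R ⊗ W` inside `V ⊗ W`. -/
theorem stmt18 [Field F] [AddCommGroup V] [Module F V] [AddCommGroup W] [Module F W]
    [FiniteDimensional F V] [FiniteDimensional F W] [Nontrivial V] [Nontrivial W]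
    (hchar2 : (2 : F) ≠ 0) (hchar3 : (3 : F) ≠ 0)
    (gV : ZMod 2 → Submodule F V) (gW : ZMod 2 → Submodule F W)
    (f : V →ₗ[F] V →ₗ[F] W) (hf : IsSSKE gV gW f)
    (hW0 : Module.finrank F ↥(gW 0) = 1) (hW1 : gW 1 = ⊥)
    (R : Submodule F V) (hR : ∀ v : V, v ∈ R ↔ ∀ u : V, f v u = 0)
    (D : Submodule F V) (hDg : IsGradedSub gV D) (hDR : IsCompl D R)
    (hD0 : Module.finrank F ↥(D ⊓ gV 0) = 2) (hD1 : D ⊓ gV 1 = ⊥) :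
    XFr gV (⊤ : Submodule F V) f = tensSpan R (⊤ : Submodule F W) := by
  exact stmt18_general hchar2 gV gW f hf R hR D hDg hDR hD0 hD1
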